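/- Let G ∈ ℂ^{r×m}, let c > 0 be a real number, and let X ∈ ℂ^{m×s} (s ≤ m) be semi-unitary, i.e., XᴴX = I_s. Then det(I_r + c·G X Xᴴ Gᴴ) ≤ ∏_{i=1}^{s} (1 + c·λ_i(Gᴴ G)). Moreover, equality holds if (Gᴴ G) X = X D where D is the diagonal matrix with diagonal entries λ_1(GᴴG), …, λ_s(GᴴG), i.e., when the columns of X are orthonormal eigenvectors of GᴴG associated with its s largest eigenvalues (equivalently, dominant right singular vectors of G). -/

import Mathlib

open Matrix
open scoped ComplexOrder

/-!
By Sylvester's identity the determinant equals `det (Xᴴ B X)` with `B = 1 + c • GᴴG`; after a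
unitary change of basis `B` is a diagonal matrix `D`. If `t` is the smallest of its `s` largest
entries, then `D ≤ t • (1 + P)` with `P = (t⁻¹ • D - 1)⁺`, so monotonicity of `det` on positive
semidefinite matrices gives `det (Xᴴ D X) ≤ t ^ s * det (1 + Xᴴ P X)`. Since `X Xᴴ ≤ 1`, Sylvester's
identity and monotonicity bound this by `t ^ s * det (1 + P)`, in which exactly the `s` largest
entries of `D` survive.
-/

lemma le_castLE_of_notMem_range_castLE {α : Type*} [Preorder α] {s m : ℕ} (hs : s ≤ m)
    {μ : Fin m → α} (hμ : Antitone μ) (i : Fin s) {j : Fin m}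
    (hj : j ∉ Set.range (Fin.castLE hs)) : μ j ≤ μ (Fin.castLE hs i) := by
  rw [Fin.range_castLE, Set.mem_ofPred_eq, not_lt] at hj
  exact hμ (i.is_lt.le.trans hj)

lemma pow_card_mul_prod_one_add_posPart {K n ι : Type*} [Field K] [LinearOrder K]
    [IsStrictOrderedRing K] [Fintype n] [Fintype ι] {d : n → K} (e : ι ↪ n) {t : K} (ht : 0 < t)
    (hle : ∀ i, t ≤ d (e i)) (hge : ∀ j ∉ Set.range e, d j ≤ t) :
    t ^ Fintype.card ι * ∏ j, (1 + (d j / t - 1)⁺) = ∏ i, d (e i) := by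
  have hprod : ∏ i, d (e i) / t = ∏ j, (1 + (d j / t - 1)⁺) := by
    refine Fintype.prod_of_injective e e.injective _ _ (fun j hj => ?_) fun i => ?_
    · rw [posPart_eq_zero.2 (sub_nonpos.2 ((div_le_one ht).2 (hge j hj))), add_zero]
    · rw [posPart_eq_self.2 (sub_nonneg.2 ((one_le_div ht).2 (hle i))), add_sub_cancel]
  rw [← hprod, Finset.prod_div_distrib, Finset.prod_const, Finset.card_univ,
    mul_div_cancel₀ _ (pow_pos ht _).ne']

section LoewnerOrder

open scoped MatrixOrder

variable {𝕜 n ι : Type*} [RCLike 𝕜]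

lemma diagonal_le_smul_one_add_diagonal_posPart [DecidableEq n] (d : n → ℝ) {t : ℝ} (ht : 0 < t) :
    diagonal (fun j => (d j : 𝕜)) ≤
      (t : 𝕜) • (1 + diagonal (fun j => (((d j / t - 1)⁺ : ℝ) : 𝕜))) := by
  have hle (j : n) : d j ≤ t * (1 + (d j / t - 1)⁺) := by
    calc d j = t * (1 + (d j / t - 1)) := by field_simp; ring
      _ ≤ t * (1 + (d j / t - 1)⁺) := by gcongr; exact le_posPart _
  rw [le_iff, ← diagonal_one, diagonal_add, ← diagonal_smul, diagonal_sub,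
    posSemidef_diagonal_iff]
  intro j
  simpa using mod_cast hle j

variable [Fintype n]

lemma conjTranspose_mul_mul_mono [Finite ι] {A B : Matrix n n 𝕜} (hAB : A ≤ B)
    (X : Matrix n ι 𝕜) :
    Xᴴ * A * X ≤ Xᴴ * B * X := by
  rw [le_iff] at hAB ⊢
  simpa only [Matrix.mul_sub, Matrix.sub_mul] using hAB.conjTranspose_mul_mul_same X

variable [Fintype ι] [DecidableEq n] [DecidableEq ι]

lemma mul_conjTranspose_le_one {X : Matrix n ι 𝕜} (hX : Xᴴ * X = 1) : X * Xᴴ ≤ 1 := by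
  have hproj : IsStarProjection (X * Xᴴ) :=
    { isIdempotentElem := by
        rw [IsIdempotentElem, Matrix.mul_assoc, ← Matrix.mul_assoc Xᴴ, hX, Matrix.one_mul]
      isSelfAdjoint := isHermitian_mul_conjTranspose_self X }
  exact hproj.le_one

lemma one_add_smul_eq_unitary_conj {A : Matrix n n 𝕜} (hA : A.IsHermitian) (c : ℝ) :
    1 + (c : 𝕜) • A = (hA.eigenvectorUnitary : Matrix n n 𝕜) *
      diagonal (fun i => ((1 + c * hA.eigenvalues i : ℝ) : 𝕜)) *
        (hA.eigenvectorUnitary : Matrix n n 𝕜)ᴴ := by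
  have hdiag : diagonal (fun i => ((1 + c * hA.eigenvalues i : ℝ) : 𝕜)) =
      1 + (c : 𝕜) • diagonal (RCLike.ofReal ∘ hA.eigenvalues) := by
    rw [← diagonal_one, ← diagonal_smul, diagonal_add]
    congr 1; ext i; simp
  conv_lhs =>
    rw [hA.spectral_theorem, ← map_smul,
      ← map_one (Unitary.conjStarAlgAut 𝕜 _ hA.eigenvectorUnitary), ← map_add, ← hdiag]
  rfl

lemma det_one_add_smul_eq_prod_eigenvalues {A : Matrix n n 𝕜} (hA : A.IsHermitian) (c : ℝ) :
    (1 + (c : 𝕜) • A).det = ((∏ i, (1 + c * hA.eigenvalues i) : ℝ) : 𝕜) := by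
  rw [one_add_smul_eq_unitary_conj hA, det_mul_comm, ← Matrix.mul_assoc, ← star_eq_conjTranspose,
    Unitary.coe_star_mul_self, Matrix.one_mul, det_diagonal]
  simp

lemma one_le_det_one_add {P : Matrix n n 𝕜} (hP : P.PosSemidef) : 1 ≤ (1 + P).det := by
  have hdet : (1 + P).det = ((∏ i, (1 + hP.1.eigenvalues i) : ℝ) : 𝕜) := by
    simpa using det_one_add_smul_eq_prod_eigenvalues hP.1 1
  have hprod : 1 ≤ ∏ i, (1 + hP.1.eigenvalues i) :=
    Finset.one_le_prod fun i _ => le_add_of_nonneg_right (hP.eigenvalues_nonneg i)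
  rw [hdet]
  exact_mod_cast hprod

lemma det_le_det_of_posDef {A B : Matrix n n 𝕜} (hA : A.PosDef) (hAB : A ≤ B) :
    A.det ≤ B.det := by
  obtain ⟨C, hC⟩ := CStarAlgebra.nonneg_iff_eq_star_mul_self.1 (sub_nonneg.2 hAB)
  have hfactor : B = A * (1 + A⁻¹ * Cᴴ * C) := by
    rw [Matrix.mul_assoc, mul_add, mul_one,
      mul_nonsing_inv_cancel_left _ _ ((isUnit_iff_isUnit_det A).1 hA.isUnit),
      ← star_eq_conjTranspose, ← hC, add_sub_cancel]
  have hone : 1 ≤ (1 + C * A⁻¹ * Cᴴ).det :=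
    one_le_det_one_add (hA.inv.posSemidef.mul_mul_conjTranspose_same C)
  rw [hfactor, det_mul, det_one_add_mul_comm, ← Matrix.mul_assoc]
  exact le_mul_of_one_le_right hA.det_pos.le hone

lemma det_le_det_of_posSemidef {A B : Matrix n n 𝕜} (hA : A.PosSemidef) (hAB : A ≤ B) :
    A.det ≤ B.det := by
  by_cases hdet : A.det = 0
  · rw [hdet]
    exact (nonneg_iff_posSemidef.1 (hA.nonneg.trans hAB)).det_nonneg
  · exact det_le_det_of_posDef (hA.posDef_iff_det_ne_zero.2 hdet) hAB

lemma det_one_add_conjTranspose_mul_mul_le {P : Matrix n n 𝕜} (hP : P.PosSemidef)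
    {X : Matrix n ι 𝕜} (hX : X * Xᴴ ≤ 1) : (1 + Xᴴ * P * X).det ≤ (1 + P).det := by
  obtain ⟨C, rfl⟩ := CStarAlgebra.nonneg_iff_eq_star_mul_self.1 hP.nonneg
  rw [star_eq_conjTranspose]
  have hXC : C * (X * Xᴴ) * Cᴴ ≤ C * Cᴴ := by
    simpa using conjTranspose_mul_mul_mono hX Cᴴ
  have hpsd : (1 + C * (X * Xᴴ) * Cᴴ).PosSemidef :=
    PosSemidef.one.add ((posSemidef_self_mul_conjTranspose X).mul_mul_conjTranspose_same C)
  calc (1 + Xᴴ * (Cᴴ * C) * X).det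
      = (1 + (Xᴴ * Cᴴ) * (C * X)).det := by simp only [Matrix.mul_assoc]
    _ = (1 + C * (X * Xᴴ) * Cᴴ).det := by
      rw [det_one_add_mul_comm]; simp only [Matrix.mul_assoc]
    _ ≤ (1 + C * Cᴴ).det := det_le_det_of_posSemidef hpsd (add_le_add_right hXC 1)
    _ = (1 + Cᴴ * C).det := det_one_add_mul_comm C Cᴴ

lemma det_conjTranspose_mul_mul_le_of_le_smul_one_add {A P : Matrix n n 𝕜} (hA : A.PosSemidef)
    (hP : P.PosSemidef) {t : ℝ} (ht : 0 < t) (hAP : A ≤ (t : 𝕜) • (1 + P))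
    {X : Matrix n ι 𝕜} (hX : Xᴴ * X = 1) :
    (Xᴴ * A * X).det ≤ (t : 𝕜) ^ Fintype.card ι * (1 + P).det := by
  have ht' : (0 : 𝕜) ≤ (t : 𝕜) ^ Fintype.card ι := pow_nonneg (by exact_mod_cast ht.le) _
  calc (Xᴴ * A * X).det
      ≤ (Xᴴ * ((t : 𝕜) • (1 + P)) * X).det :=
        det_le_det_of_posSemidef (hA.conjTranspose_mul_mul_same X)
          (conjTranspose_mul_mul_mono hAP X)
    _ = (t : 𝕜) ^ Fintype.card ι * (1 + Xᴴ * P * X).det := by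
      rw [Matrix.mul_smul, Matrix.smul_mul, Matrix.mul_add, Matrix.add_mul, Matrix.mul_one, hX,
        det_smul]
    _ ≤ (t : 𝕜) ^ Fintype.card ι * (1 + P).det :=
      mul_le_mul_of_nonneg_left
        (det_one_add_conjTranspose_mul_mul_le hP (mul_conjTranspose_le_one hX)) ht'

lemma det_conjTranspose_mul_diagonal_mul_le {d : n → ℝ} (hd : ∀ j, 0 < d j) (e : ι ↪ n)
    (he : ∀ i, ∀ j ∉ Set.range e, d j ≤ d (e i)) {X : Matrix n ι 𝕜} (hX : Xᴴ * X = 1) :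
    (Xᴴ * diagonal (fun j => (d j : 𝕜)) * X).det ≤ ((∏ i, d (e i) : ℝ) : 𝕜) := by
  rcases isEmpty_or_nonempty ι with _ | _
  · simp
  obtain ⟨k, hk⟩ := Finite.exists_min fun i => d (e i)
  have hD : (diagonal fun j => (d j : 𝕜)).PosSemidef :=
    posSemidef_diagonal_iff.2 fun j => mod_cast (hd j).le
  have hP : (diagonal fun j => (((d j / d (e k) - 1)⁺ : ℝ) : 𝕜)).PosSemidef :=
    posSemidef_diagonal_iff.2 fun j => mod_cast posPart_nonneg (d j / d (e k) - 1)
  refine (det_conjTranspose_mul_mul_le_of_le_smul_one_add hD hP (hd (e k))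
    (diagonal_le_smul_one_add_diagonal_posPart d (hd (e k))) hX).trans_eq ?_
  rw [← pow_card_mul_prod_one_add_posPart e (hd (e k)) hk (he k), ← diagonal_one, diagonal_add,
    det_diagonal]
  simp

end LoewnerOrder

section Compression

variable {𝕜 r n ι : Type*} [RCLike 𝕜] [Fintype r] [Fintype n] [Fintype ι]
  [DecidableEq r] [DecidableEq ι]

lemma det_one_add_smul_compression_eq_prod {A : Matrix n n 𝕜} {X : Matrix n ι 𝕜}
    (hX : Xᴴ * X = 1) {ν : ι → ℝ} (hν : A * X = X * diagonal fun i => (ν i : 𝕜)) (c : ℝ) :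
    (1 + (c : 𝕜) • (Xᴴ * A * X)).det = ((∏ i, (1 + c * ν i) : ℝ) : 𝕜) := by
  rw [Matrix.mul_assoc, hν, ← Matrix.mul_assoc, hX, Matrix.one_mul, ← diagonal_one,
    ← diagonal_smul, diagonal_add, det_diagonal]
  simp

lemma det_one_add_smul_outer_eq_det_compression (G : Matrix r n 𝕜) (X : Matrix n ι 𝕜) (c : 𝕜) :
    (1 + c • (G * X * Xᴴ * Gᴴ)).det = (1 + c • (Xᴴ * (Gᴴ * G) * X)).det := by
  simpa only [Matrix.smul_mul, Matrix.mul_smul, Matrix.mul_assoc] using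
    det_one_add_mul_comm (c • (G * X)) (Xᴴ * Gᴴ)

variable [DecidableEq n]

lemma det_one_add_smul_compression_le_prod_eigenvalues {A : Matrix n n 𝕜} (hA : A.PosSemidef)
    {c : ℝ} (hc : 0 ≤ c) (e : ι ↪ n)
    (he : ∀ i, ∀ j ∉ Set.range e, hA.1.eigenvalues j ≤ hA.1.eigenvalues (e i))
    {X : Matrix n ι 𝕜} (hX : Xᴴ * X = 1) :
    (1 + (c : 𝕜) • (Xᴴ * A * X)).det ≤
      ((∏ i, (1 + c * hA.1.eigenvalues (e i)) : ℝ) : 𝕜) := by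
  set U := (hA.1.eigenvectorUnitary : Matrix n n 𝕜)
  let d : n → ℝ := fun j => 1 + c * hA.1.eigenvalues j
  have hU : U * Uᴴ = 1 := Unitary.coe_mul_star_self hA.1.eigenvectorUnitary
  have hUX : (Uᴴ * X)ᴴ * (Uᴴ * X) = 1 := by
    rw [conjTranspose_mul, conjTranspose_conjTranspose, Matrix.mul_assoc, ← Matrix.mul_assoc U,
      hU, Matrix.one_mul, hX]
  have hd (j : n) : 0 < d j :=
    add_pos_of_pos_of_nonneg one_pos (mul_nonneg hc (hA.eigenvalues_nonneg j))
  have hdom (i : ι) (j : n) (hj : j ∉ Set.range e) : d j ≤ d (e i) := by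
    have := he i j hj
    simp only [d]
    gcongr
  have hdiag : 1 + (c : 𝕜) • (Xᴴ * A * X) =
      (Uᴴ * X)ᴴ * diagonal (fun j => (d j : 𝕜)) * (Uᴴ * X) := by
    calc 1 + (c : 𝕜) • (Xᴴ * A * X)
        = Xᴴ * (1 + (c : 𝕜) • A) * X := by
          rw [Matrix.mul_add, Matrix.add_mul, Matrix.mul_one, hX, Matrix.mul_smul,
            Matrix.smul_mul]
      _ = (Uᴴ * X)ᴴ * diagonal (fun j => (d j : 𝕜)) * (Uᴴ * X) := by
          rw [one_add_smul_eq_unitary_conj hA.1]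
          simp only [conjTranspose_mul, conjTranspose_conjTranspose, Matrix.mul_assoc, U, d]
  rw [hdiag]
  exact det_conjTranspose_mul_diagonal_mul_le hd e hdom hUX

theorem det_one_add_smul_outer_le_general (G : Matrix r n 𝕜) {c : ℝ} (hc : 0 ≤ c) (μ : n → ℝ)
    (hμ : ∃ σ : Equiv.Perm n, ∀ i,
      μ i = (posSemidef_conjTranspose_mul_self G).isHermitian.eigenvalues (σ i))
    (e : ι ↪ n) (he : ∀ i, ∀ j ∉ Set.range e, μ j ≤ μ (e i))
    (X : Matrix n ι 𝕜) (hX : Xᴴ * X = 1) :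
    RCLike.im (1 + (c : 𝕜) • (G * X * Xᴴ * Gᴴ)).det = 0 ∧
    RCLike.re (1 + (c : 𝕜) • (G * X * Xᴴ * Gᴴ)).det ≤ ∏ i, (1 + c * μ (e i)) ∧
    (Gᴴ * G * X = X * diagonal (fun i => (μ (e i) : 𝕜)) →
      RCLike.re (1 + (c : 𝕜) • (G * X * Xᴴ * Gᴴ)).det = ∏ i, (1 + c * μ (e i))) := by
  obtain ⟨σ, hσ⟩ := hμ
  have hdom (i : ι) (j : n) (hj : j ∉ Set.range (e.trans σ.toEmbedding)) :
      (posSemidef_conjTranspose_mul_self G).isHermitian.eigenvalues j ≤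
        (posSemidef_conjTranspose_mul_self G).isHermitian.eigenvalues (σ (e i)) := by
    have hj' : σ.symm j ∉ Set.range e := by
      rintro ⟨k, hk⟩
      exact hj ⟨k, by simp [hk]⟩
    simpa [hσ] using he i _ hj'
  have hle := det_one_add_smul_compression_le_prod_eigenvalues
    (posSemidef_conjTranspose_mul_self G) hc (e.trans σ.toEmbedding) hdom hX
  simp only [Function.Embedding.trans_apply, Equiv.toEmbedding_apply, ← hσ] at hle
  rw [det_one_add_smul_outer_eq_det_compression]
  obtain ⟨hre, him⟩ := RCLike.le_iff_re_im.1 hle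
  refine ⟨him.trans (RCLike.ofReal_im _), hre.trans_eq (RCLike.ofReal_re _), fun hXD => ?_⟩
  rw [det_one_add_smul_compression_eq_prod hX hXD, RCLike.ofReal_re]

end Compression

/-- **Optimal equivalent baseband precoder (equation (6)).**
Let `G : ℂ^{r×m}`, `c > 0`, and let `X : ℂ^{m×s}` (`s ≤ m`) be semi-unitary
(`XᴴX = 1`).  Let `μ` enumerate the eigenvalues of `GᴴG` in decreasing order with
multiplicity.  Then `det(1 + c·G X Xᴴ Gᴴ)` is real and at most
`∏_{i<s} (1 + c·μ i)`, with equality when `(GᴴG) X = X D` for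
`D = diag(μ 0, …, μ (s-1))`, i.e. when the columns of `X` are orthonormal
eigenvectors of `GᴴG` for its `s` largest eigenvalues. -/
theorem det_one_add_smul_outer_le
    {r m s : ℕ} (hs : s ≤ m)
    (G : Matrix (Fin r) (Fin m) ℂ) (c : ℝ) (hc : 0 < c)
    (μ : Fin m → ℝ) (hμ_dec : Antitone μ)
    (hμ_eig : ∃ σ : Equiv.Perm (Fin m), ∀ i,
      μ i = (Matrix.posSemidef_conjTranspose_mul_self G).isHermitian.eigenvalues (σ i))
    (X : Matrix (Fin m) (Fin s) ℂ) (hX : Xᴴ * X = 1) :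
    ((1 + (c : ℂ) • (G * X * Xᴴ * Gᴴ)).det.im = 0)
    ∧ ((1 + (c : ℂ) • (G * X * Xᴴ * Gᴴ)).det.re
        ≤ ∏ i : Fin s, (1 + c * μ (Fin.castLE hs i)))
    ∧ ((Gᴴ * G) * X = X * Matrix.diagonal (fun i : Fin s => (μ (Fin.castLE hs i) : ℂ)) →
        (1 + (c : ℂ) • (G * X * Xᴴ * Gᴴ)).det.re
          = ∏ i : Fin s, (1 + c * μ (Fin.castLE hs i))) := by
  exact det_one_add_smul_outer_le_general G hc.le μ hμ_eig (Fin.castLEEmb hs)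
    (fun i _ hj => le_castLE_of_notMem_range_castLE hs hμ_dec i hj) X hX
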